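/- Let γ ∈ [0,1) and let f be an injective holomorphic map from the unit disk B(0,1) ⊆ ℂ into ℂ. Suppose for each r ∈ (0,1) that u_r is a γ-torsion function of the simply connected domain f(B(0,r)), and that the map (r,z) ↦ u_r(f(z)) is continuously differentiable jointly on {(r,z) : 0 < r < 1, |z| < r}. Then the function r ↦ r^{−4/(1−γ)} · ∫_{f(B(0,r))} |∇u_r|² dA is monotone increasing on (0,1); moreover, if f is not an affine linear map z ↦ az + b, it is strictly increasing. (This is the forward Schwarz-type lemma for the γ-torsional rigidity, Lemma 5.1, since T_γ(B(0,r)) = r^{4/(1−γ)} T_γ(B(0,1)).) -/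

import Mathlib

open MeasureTheory Real

/-- The Euclidean Laplacian on `ℝ² ≅ ℂ`. -/
noncomputable def lapC (u : ℂ → ℝ) (x : ℂ) : ℝ :=
  fderiv ℝ (fderiv ℝ u) x 1 1 + fderiv ℝ (fderiv ℝ u) x Complex.I Complex.I

/-- `u` is a `γ`-torsion function of `O ⊆ ℂ`: continuous on the closure, `C¹` up to the
boundary, `C²` inside, with `Δu = -u^γ`, `u > 0` in `O` and `u = 0` on `∂O`. -/
def IsTorsionFnC (γ : ℝ) (O : Set ℂ) (u : ℂ → ℝ) : Prop :=
  ContinuousOn u (closure O) ∧ ContDiffOn ℝ 1 u (closure O) ∧ ContDiffOn ℝ 2 u O ∧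
  (∀ x ∈ O, lapC u x = -(u x ^ γ)) ∧ (∀ x ∈ O, 0 < u x) ∧ (∀ x ∈ frontier O, u x = 0)

/-- squared norm of the gradient, in coordinates -/
noncomputable def gsq (u : ℂ → ℝ) (x : ℂ) : ℝ :=
  (fderiv ℝ u x 1) ^ 2 + (fderiv ℝ u x Complex.I) ^ 2

lemma gsq_nonneg (u : ℂ → ℝ) (x : ℂ) : 0 ≤ gsq u x := by unfold gsq; positivity

lemma norm_gradient_sq (u : ℂ → ℝ) (x : ℂ) : ‖gradient u x‖ ^ 2 = gsq u x := by
  have h : ∀ v, fderiv ℝ u x v = inner ℝ (gradient u x) v := by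
    intro v
    simp [gradient]
  rw [gsq, h, h, Complex.inner, Complex.inner, ← Complex.normSq_eq_norm_sq, Complex.normSq_apply]
  simp
  ring

lemma posSq_hasDerivAt (t : ℝ) : HasDerivAt (fun t : ℝ => (max t 0) ^ 2) (2 * max t 0) t := by
  rcases lt_trichotomy t 0 with h | h | h
  · rw [max_eq_right h.le]
    refine (HasDerivAt.congr_of_eventuallyEq (hasDerivAt_const t (0 : ℝ)) ?_).congr_deriv (by simp)
    filter_upwards [Iio_mem_nhds h] with s hs
    rw [max_eq_right (le_of_lt hs)]; simp
  · subst h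
    rw [hasDerivAt_iff_isLittleO_nhds_zero]
    simp only [zero_add, max_self, mul_zero, smul_zero, sub_zero, ne_eq, OfNat.ofNat_ne_zero,
      not_false_eq_true, zero_pow]
    have h1 : (fun h : ℝ => (max h 0) ^ 2) =O[nhds 0] fun h : ℝ => h ^ 2 := by
      refine Asymptotics.IsBigO.of_bound 1 (Filter.Eventually.of_forall fun s => ?_)
      simp only [norm_pow, Real.norm_eq_abs, one_mul, sq_abs]
      rcases le_total s 0 with hs | hs
      · rw [max_eq_right hs]; simpa using sq_nonneg s
      · rw [max_eq_left hs]
    refine h1.trans_isLittleO ?_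
    simpa using (Asymptotics.isLittleO_pow_id (𝕜 := ℝ) (n := 2) (by norm_num))
  · rw [max_eq_left h.le]
    refine (HasDerivAt.congr_of_eventuallyEq (hasDerivAt_pow 2 t) ?_).congr_deriv (by simp)
    filter_upwards [Ioi_mem_nhds h] with s hs
    rw [max_eq_left (le_of_lt hs)]

lemma posSq_contDiff : ContDiff ℝ 1 (fun t : ℝ => (max t 0) ^ 2) := by
  rw [contDiff_one_iff_deriv]
  refine ⟨fun t => (posSq_hasDerivAt t).differentiableAt, ?_⟩
  have : deriv (fun t : ℝ => (max t 0) ^ 2) = fun t => 2 * max t 0 := by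
    ext t; exact (posSq_hasDerivAt t).deriv
  rw [this]
  fun_prop

/-- integral of a directional derivative of a compactly supported `C¹` function -/
lemma integral_fderiv_zero (V : ℂ → ℝ) (hV : ContDiff ℝ 1 V) (hc : HasCompactSupport V) (v : ℂ) :
    Integrable (fun x => fderiv ℝ V x v) ∧ ∫ x, fderiv ℝ V x v = 0 := by
  have hcont : Continuous fun x => fderiv ℝ V x v :=
    (hV.continuous_fderiv (by simp)).clm_apply continuous_const
  have hcs : HasCompactSupport fun x => fderiv ℝ V x v := hc.fderiv_apply (𝕜 := ℝ) v
  have hi := hcont.integrable_of_hasCompactSupport hcs (μ := volume)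
  refine ⟨hi, ?_⟩
  have := integral_mul_fderiv_eq_neg_fderiv_mul_of_integrable (μ := (volume : Measure ℂ))
    (f := fun _ : ℂ => (1 : ℝ)) (g := V) (v := v) (by simp) (by simpa using hi)
    (by simpa using hV.continuous.integrable_of_hasCompactSupport hc)
    (fun x _ => by fun_prop) (fun x _ => hV.differentiable (by simp) x)
  simpa using this

/-- the part of the divergence theorem for the field `q ∂_v y` -/
lemma div_part {U : Set ℂ} (hU : IsOpen U) {q y : ℂ → ℝ} (hy : ContDiffOn ℝ 2 y U)
    (hq : ContDiffOn ℝ 1 q U) {K : Set ℂ} (hK : IsCompact K) (hKU : K ⊆ U)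
    (hqK : ∀ z ∈ U, z ∉ K → q z = 0) (v : ℂ) :
    IntegrableOn (fun z => fderiv ℝ q z v * fderiv ℝ y z v
      + q z * fderiv ℝ (fderiv ℝ y) z v v) U ∧
    ∫ z in U, (fderiv ℝ q z v * fderiv ℝ y z v + q z * fderiv ℝ (fderiv ℝ y) z v v) = 0 := by
  classical
  set V : ℂ → ℝ := U.indicator (fun z => q z * fderiv ℝ y z v) with hVdef
  have hDy : ContDiffOn ℝ 1 (fderiv ℝ y) U := hy.fderiv_of_isOpen hU (by norm_num)
  have hVU : ∀ z ∈ U, V =ᶠ[nhds z] fun z => q z * fderiv ℝ y z v := by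
    intro z hz
    filter_upwards [hU.mem_nhds hz] with w hw
    simp [hVdef, hw]
  have hVK : ∀ z, z ∉ K → V z = 0 := by
    intro z hz
    by_cases h : z ∈ U
    · simp [hVdef, h, hqK z h hz]
    · simp [hVdef, h]
  have hVK' : ∀ z, z ∉ K → V =ᶠ[nhds z] fun _ => 0 := by
    intro z hz
    filter_upwards [hK.isClosed.isOpen_compl.mem_nhds hz] with w hw
    exact hVK w hw
  have hcs : HasCompactSupport V := HasCompactSupport.intro hK fun z hz => hVK z hz
  have hVc : ContDiff ℝ 1 V := by
    rw [contDiff_iff_contDiffAt]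
    intro z
    by_cases h : z ∈ U
    · refine ContDiffAt.congr_of_eventuallyEq ?_ (hVU z h)
      exact ((hq.contDiffAt (hU.mem_nhds h)).mul
        ((hDy.contDiffAt (hU.mem_nhds h)).clm_apply contDiffAt_const))
    · exact ContDiffAt.congr_of_eventuallyEq contDiffAt_const (hVK' z fun hk => h (hKU hk))
  obtain ⟨h1, h2⟩ := integral_fderiv_zero V hVc hcs v
  have hEq : Set.EqOn (fun z => fderiv ℝ V z v) (fun z => fderiv ℝ q z v * fderiv ℝ y z v
      + q z * fderiv ℝ (fderiv ℝ y) z v v) U := by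
    intro z hz
    have hd1 : DifferentiableAt ℝ q z :=
      (hq.contDiffAt (hU.mem_nhds hz)).differentiableAt (by simp)
    have hd2 : DifferentiableAt ℝ (fderiv ℝ y) z :=
      (hDy.contDiffAt (hU.mem_nhds hz)).differentiableAt (by simp)
    have hd3 : HasFDerivAt (fun z => fderiv ℝ y z v) _ z :=
      hd2.hasFDerivAt.clm_apply (hasFDerivAt_const v z)
    have := (hd1.hasFDerivAt.fun_mul hd3)
    simp only
    rw [(hVU z hz).fderiv_eq, this.fderiv]
    simp
    ring
  have hz0 : ∀ z, z ∉ U → fderiv ℝ V z v = 0 := by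
    intro z hz
    rw [(hVK' z fun hk => hz (hKU hk)).fderiv_eq]
    simp
  refine ⟨(h1.integrableOn).congr_fun hEq hU.measurableSet, ?_⟩
  rw [← setIntegral_congr_fun hU.measurableSet hEq, setIntegral_eq_integral_of_forall_compl_eq_zero hz0, h2]

/-- divergence theorem for the field `q ∇y` with compact support inside `U` -/
lemma div_thm {U : Set ℂ} (hU : IsOpen U) {q y : ℂ → ℝ} (hy : ContDiffOn ℝ 2 y U)
    (hq : ContDiffOn ℝ 1 q U) {K : Set ℂ} (hK : IsCompact K) (hKU : K ⊆ U)
    (hqK : ∀ z ∈ U, z ∉ K → q z = 0) :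
    IntegrableOn (fun z => fderiv ℝ q z 1 * fderiv ℝ y z 1
      + fderiv ℝ q z Complex.I * fderiv ℝ y z Complex.I + q z * lapC y z) U ∧
    ∫ z in U, (fderiv ℝ q z 1 * fderiv ℝ y z 1
      + fderiv ℝ q z Complex.I * fderiv ℝ y z Complex.I + q z * lapC y z) = 0 := by
  obtain ⟨a1, a2⟩ := div_part hU hy hq hK hKU hqK 1
  obtain ⟨b1, b2⟩ := div_part hU hy hq hK hKU hqK Complex.I
  have hE : (fun z => fderiv ℝ q z 1 * fderiv ℝ y z 1
      + fderiv ℝ q z Complex.I * fderiv ℝ y z Complex.I + q z * lapC y z) =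
      fun z => (fderiv ℝ q z 1 * fderiv ℝ y z 1 + q z * fderiv ℝ (fderiv ℝ y) z 1 1) +
      (fderiv ℝ q z Complex.I * fderiv ℝ y z Complex.I
        + q z * fderiv ℝ (fderiv ℝ y) z Complex.I Complex.I) := by
    ext z; unfold lapC; ring
  rw [hE]
  exact ⟨a1.add b1, by rw [integral_add a1 b1, a2, b2, add_zero]⟩

/-- monotone convergence -/
lemma mono_conv {U : Set ℂ} (hU : MeasurableSet U) (F : ℕ → ℂ → ℝ) (G : ℂ → ℝ)
    (hi : ∀ n, IntegrableOn (F n) U) (h0 : ∀ n, ∀ z ∈ U, 0 ≤ F n z)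
    (hm : ∀ z ∈ U, Monotone fun n => F n z)
    (hl : ∀ z ∈ U, Filter.Tendsto (fun n => F n z) Filter.atTop (nhds (G z)))
    (C : ℝ) (hC : ∀ n, ∫ z in U, F n z ≤ C) :
    IntegrableOn G U ∧
      Filter.Tendsto (fun n => ∫ z in U, F n z) Filter.atTop (nhds (∫ z in U, G z)) := by
  have hG0 : ∀ z ∈ U, 0 ≤ G z := fun z hz => ge_of_tendsto' (hl z hz) fun n => h0 n z hz
  have hlae : ∀ᵐ z ∂(volume.restrict U),
      Filter.Tendsto (fun n => F n z) Filter.atTop (nhds (G z)) :=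
    (ae_restrict_iff' hU).2 (Filter.Eventually.of_forall hl)
  have hGm : AEStronglyMeasurable G (volume.restrict U) :=
    aestronglyMeasurable_of_tendsto_ae _ (fun n => (hi n).aestronglyMeasurable) hlae
  have hlin : ∫⁻ z in U, ENNReal.ofReal (G z) ≤ ENNReal.ofReal C := by
    have ht := lintegral_tendsto_of_tendsto_of_monotone (μ := volume.restrict U)
      (f := fun n z => ENNReal.ofReal (F n z)) (F := fun z => ENNReal.ofReal (G z))
      (fun n => (hi n).aestronglyMeasurable.aemeasurable.ennreal_ofReal)
      ((ae_restrict_iff' hU).2 (Filter.Eventually.of_forall fun z hz n m hnm =>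
        ENNReal.ofReal_le_ofReal (hm z hz hnm)))
      (hlae.mono fun z hz => (ENNReal.continuous_ofReal.tendsto _).comp hz)
    refine le_of_tendsto' ht fun n => ?_
    rw [← ofReal_integral_eq_lintegral_ofReal (hi n)
      ((ae_restrict_iff' hU).2 (Filter.Eventually.of_forall (h0 n)))]
    exact ENNReal.ofReal_le_ofReal (hC n)
  have hGi : IntegrableOn G U := by
    refine ⟨hGm, ?_⟩
    rw [hasFiniteIntegral_iff_ofReal ((ae_restrict_iff' hU).2 (Filter.Eventually.of_forall hG0))]
    exact lt_of_le_of_lt hlin ENNReal.ofReal_lt_top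
  exact ⟨hGi, integral_tendsto_of_tendsto_of_monotone hi hGi
    ((ae_restrict_iff' hU).2 (Filter.Eventually.of_forall hm)) hlae⟩

/-- positive solutions of `Δ y = - g y ^ γ` in the unit disc, with zero boundary values -/
structure Sol (γ : ℝ) (g y : ℂ → ℝ) : Prop where
  c2 : ContDiffOn ℝ 2 y (Metric.ball 0 1)
  pos : ∀ z ∈ Metric.ball (0 : ℂ) 1, 0 < y z
  cpt : ∀ ε > 0, ∃ K : Set ℂ, IsCompact K ∧ K ⊆ Metric.ball 0 1 ∧
    ∀ z ∈ Metric.ball (0 : ℂ) 1, z ∉ K → y z < ε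
  lap : ∀ z ∈ Metric.ball (0 : ℂ) 1, lapC y z = -(g z * y z ^ γ)
  gcont : ContinuousOn g (Metric.ball 0 1)
  gnn : ∀ z ∈ Metric.ball (0 : ℂ) 1, 0 ≤ g z
  gbd : ∃ C, ∀ z ∈ Metric.ball (0 : ℂ) 1, g z ≤ C

lemma Sol.bdd {γ : ℝ} {g y : ℂ → ℝ} (h : Sol γ g y) :
    ∃ C, 0 ≤ C ∧ ∀ z ∈ Metric.ball (0 : ℂ) 1, y z ≤ C := by
  obtain ⟨K, hK, hKU, hy⟩ := h.cpt 1 one_pos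
  obtain ⟨C, hC⟩ := hK.exists_bound_of_continuousOn (h.c2.continuousOn.mono hKU)
  refine ⟨max C 1, by positivity, fun z hz => ?_⟩
  by_cases hzK : z ∈ K
  · exact (le_abs_self _).trans ((hC z hzK).trans (le_max_left _ _))
  · exact (hy z hz hzK).le.trans (le_max_right _ _)

lemma integrableOn_of_compact {U K : Set ℂ} (hU : IsOpen U) (hK : IsCompact K) (hKU : K ⊆ U)
    {F : ℂ → ℝ} (hF : ContinuousOn F U) (h0 : ∀ z ∈ U, z ∉ K → F z = 0) : IntegrableOn F U := by
  have h1 : IntegrableOn F K := (hF.mono hKU).integrableOn_compact hK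
  have h2 : IntegrableOn F (U \ K) := by
    have hz : IntegrableOn (fun _ : ℂ => (0 : ℝ)) (U \ K) := integrableOn_zero
    exact hz.congr_fun (fun z hz => (h0 z hz.1 hz.2).symm)
      (hU.measurableSet.diff hK.measurableSet)
  exact (h1.union h2).mono_set (by intro z hz; by_cases h : z ∈ K <;> simp [h, hz])

lemma integrableOn_of_bdd {F : ℂ → ℝ} (hF : ContinuousOn F (Metric.ball 0 1)) (C : ℝ)
    (hC : ∀ z ∈ Metric.ball (0 : ℂ) 1, ‖F z‖ ≤ C) : IntegrableOn F (Metric.ball 0 1) :=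
  IntegrableOn.of_bound measure_ball_lt_top
    (hF.aestronglyMeasurable Metric.isOpen_ball.measurableSet) C
    ((ae_restrict_iff' Metric.isOpen_ball.measurableSet).2 (Filter.Eventually.of_forall hC))

lemma continuousOn_gsq {y : ℂ → ℝ} (hy : ContDiffOn ℝ 1 y (Metric.ball 0 1)) :
    ContinuousOn (gsq y) (Metric.ball 0 1) := by
  have h := hy.continuousOn_fderiv_of_isOpen Metric.isOpen_ball (by simp)
  exact ((h.clm_apply continuousOn_const).pow 2).add ((h.clm_apply continuousOn_const).pow 2)

/-- Picone identity, integrated -/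
lemma picone_id {γ : ℝ} {g1 φ g y : ℂ → ℝ} (h1 : Sol γ g1 φ) (h : Sol γ g y) {ε : ℝ} (hε : 0 < ε) :
    IntegrableOn (fun z => 2 * (max (φ z - ε) 0 / y z) * (fderiv ℝ φ z 1 * fderiv ℝ y z 1
      + fderiv ℝ φ z Complex.I * fderiv ℝ y z Complex.I) - (max (φ z - ε) 0 / y z) ^ 2 * gsq y z)
      (Metric.ball 0 1) ∧
    IntegrableOn (fun z => g z * ((max (φ z - ε) 0) ^ 2 * y z ^ (γ - 1))) (Metric.ball 0 1) ∧
    ∫ z in Metric.ball (0 : ℂ) 1, (2 * (max (φ z - ε) 0 / y z) * (fderiv ℝ φ z 1 * fderiv ℝ y z 1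
      + fderiv ℝ φ z Complex.I * fderiv ℝ y z Complex.I) - (max (φ z - ε) 0 / y z) ^ 2 * gsq y z)
      = ∫ z in Metric.ball (0 : ℂ) 1, g z * ((max (φ z - ε) 0) ^ 2 * y z ^ (γ - 1)) := by
  obtain ⟨K, hK, hKU, hφ⟩ := h1.cpt ε hε
  have hB : IsOpen (Metric.ball (0 : ℂ) 1) := Metric.isOpen_ball
  have hΦ0 : ∀ z ∈ Metric.ball (0 : ℂ) 1, z ∉ K → max (φ z - ε) 0 = 0 := fun z hz hk =>
    max_eq_right (by linarith [hφ z hz hk])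
  have hφ1 : ContDiffOn ℝ 1 φ (Metric.ball 0 1) := h1.c2.of_le (by norm_num)
  have hy1 : ContDiffOn ℝ 1 y (Metric.ball 0 1) := h.c2.of_le (by norm_num)
  have hq : ContDiffOn ℝ 1 (fun z => (max (φ z - ε) 0) ^ 2 / y z) (Metric.ball 0 1) := by
    refine ContDiffOn.div ?_ hy1 fun z hz => (h.pos z hz).ne'
    exact posSq_contDiff.comp_contDiffOn (hφ1.sub contDiffOn_const)
  obtain ⟨i1, i2⟩ := div_thm hB h.c2 hq hK hKU (fun z hz hk => by simp [hΦ0 z hz hk])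
  have i3 : IntegrableOn (fun z => g z * ((max (φ z - ε) 0) ^ 2 * y z ^ (γ - 1)))
      (Metric.ball 0 1) := by
    refine integrableOn_of_compact hB hK hKU ?_ fun z hz hk => by simp [hΦ0 z hz hk]
    refine h.gcont.mul (ContinuousOn.mul ?_ ?_)
    · exact ((hφ1.continuousOn.sub continuousOn_const).sup continuousOn_const).pow 2
    · exact hy1.continuousOn.rpow_const fun z hz => Or.inl (h.pos z hz).ne'
  have hEq : Set.EqOn (fun z => fderiv ℝ (fun z => (max (φ z - ε) 0) ^ 2 / y z) z 1 * fderiv ℝ y z 1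
      + fderiv ℝ (fun z => (max (φ z - ε) 0) ^ 2 / y z) z Complex.I * fderiv ℝ y z Complex.I
      + (max (φ z - ε) 0) ^ 2 / y z * lapC y z)
      (fun z => (2 * (max (φ z - ε) 0 / y z) * (fderiv ℝ φ z 1 * fderiv ℝ y z 1
      + fderiv ℝ φ z Complex.I * fderiv ℝ y z Complex.I) - (max (φ z - ε) 0 / y z) ^ 2 * gsq y z)
      - g z * ((max (φ z - ε) 0) ^ 2 * y z ^ (γ - 1))) (Metric.ball 0 1) := by
    intro z hz
    have hyz := h.pos z hz
    have d1 : DifferentiableAt ℝ φ z :=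
      (hφ1.contDiffAt (hB.mem_nhds hz)).differentiableAt (by simp)
    have d2 : DifferentiableAt ℝ y z :=
      (hy1.contDiffAt (hB.mem_nhds hz)).differentiableAt (by simp)
    have d3 : HasFDerivAt (fun z => (max (φ z - ε) 0) ^ 2) ((2 * max (φ z - ε) 0) • fderiv ℝ φ z) z :=
      HasDerivAt.comp_hasFDerivAt (h₂ := fun t : ℝ => (max t 0) ^ 2) z
        (posSq_hasDerivAt (φ z - ε)) (d1.hasFDerivAt.sub_const ε)
    have d4 := d3.fun_mul ((hasDerivAt_inv hyz.ne').comp_hasFDerivAt z d2.hasFDerivAt)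
    have d5 : fderiv ℝ (fun z => (max (φ z - ε) 0) ^ 2 / y z) z = _ := d4.fderiv
    simp only
    rw [d5, h.lap z hz, rpow_sub_one hyz.ne', gsq]
    simp
    field_simp
    ring
  have i1' := i1.congr_fun hEq hB.measurableSet
  have i4 : IntegrableOn (fun z => 2 * (max (φ z - ε) 0 / y z) * (fderiv ℝ φ z 1 * fderiv ℝ y z 1
      + fderiv ℝ φ z Complex.I * fderiv ℝ y z Complex.I) - (max (φ z - ε) 0 / y z) ^ 2 * gsq y z)
      (Metric.ball 0 1) := by
    refine (i1'.add i3).congr_fun (fun z _ => ?_) hB.measurableSet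
    simp
  refine ⟨i4, i3, ?_⟩
  rw [setIntegral_congr_fun hB.measurableSet hEq, integral_sub i4 i3] at i2
  linarith

/-- the cut-off levels -/
noncomputable def lev (n : ℕ) : ℝ := 1 / ((n : ℝ) + 1)

lemma lev_pos (n : ℕ) : 0 < lev n := by unfold lev; positivity

lemma lev_anti : Antitone lev := fun _ _ h => one_div_le_one_div_of_le (by positivity)
  (by exact_mod_cast Nat.succ_le_succ h)

lemma lev_tendsto : Filter.Tendsto lev Filter.atTop (nhds 0) :=
  tendsto_one_div_add_atTop_nhds_zero_nat

lemma cut_mono (a : ℝ) : Monotone fun n => max (a - lev n) 0 := fun _ _ h =>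
  max_le_max (by linarith [lev_anti h]) le_rfl

lemma cut_tendsto {a : ℝ} (ha : 0 < a) :
    Filter.Tendsto (fun n => max (a - lev n) 0) Filter.atTop (nhds a) := by
  have : Filter.Tendsto (fun n => max (a - lev n) 0) Filter.atTop (nhds (max (a - 0) 0)) :=
    ((tendsto_const_nhds.sub lev_tendsto).max tendsto_const_nhds)
  simpa [max_eq_left ha.le] using this

lemma cut_le {a : ℝ} (ha : 0 < a) (n : ℕ) : max (a - lev n) 0 ≤ a :=
  max_le (by linarith [lev_pos n]) ha.le

lemma integrableOn_weight {γ : ℝ} (hγ0 : 0 ≤ γ) {g1 φ g y : ℂ → ℝ} (h1 : Sol γ g1 φ)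
    (h : Sol γ g y) : IntegrableOn (fun z => g z * φ z ^ (1 + γ)) (Metric.ball 0 1) := by
  obtain ⟨C, hC0, hC⟩ := h1.bdd
  obtain ⟨D, hD⟩ := h.gbd
  refine integrableOn_of_bdd (h.gcont.mul (h1.c2.continuousOn.rpow_const
    fun z hz => Or.inl (h1.pos z hz).ne')) (D * C ^ (1 + γ)) fun z hz => ?_
  have hp := h1.pos z hz
  have hg := h.gnn z hz
  rw [Real.norm_of_nonneg (by positivity)]
  exact mul_le_mul (hD z hz) (rpow_le_rpow hp.le (hC z hz) (by linarith)) (by positivity)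
    (hg.trans (hD z hz))

lemma sol_energy {γ : ℝ} (hγ0 : 0 ≤ γ) {g y : ℂ → ℝ} (h : Sol γ g y) :
    IntegrableOn (gsq y) (Metric.ball 0 1) ∧
    ∫ z in Metric.ball (0 : ℂ) 1, gsq y z = ∫ z in Metric.ball (0 : ℂ) 1, g z * y z ^ (1 + γ) := by
  have hB : MeasurableSet (Metric.ball (0 : ℂ) 1) := measurableSet_ball
  have hw := integrableOn_weight hγ0 h h
  have hpw : ∀ z ∈ Metric.ball (0 : ℂ) 1, y z ^ 2 * y z ^ (γ - 1) = y z ^ (1 + γ) := by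
    intro z hz
    rw [← rpow_natCast (y z) 2, ← rpow_add (h.pos z hz)]
    congr 1; push_cast; ring
  have hP := fun n => picone_id h h (lev_pos n)
  have hA : ∀ n z, 2 * (max (y z - lev n) 0 / y z) * (fderiv ℝ y z 1 * fderiv ℝ y z 1
      + fderiv ℝ y z Complex.I * fderiv ℝ y z Complex.I) - (max (y z - lev n) 0 / y z) ^ 2 * gsq y z
      = (1 - (1 - max (y z - lev n) 0 / y z) ^ 2) * gsq y z := by
    intro n z; unfold gsq; ring
  simp only [hA] at hP
  have hle : ∀ n, ∀ z ∈ Metric.ball (0 : ℂ) 1,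
      g z * ((max (y z - lev n) 0) ^ 2 * y z ^ (γ - 1)) ≤ g z * y z ^ (1 + γ) := by
    intro n z hz
    rw [← hpw z hz]
    have := cut_le (h.pos z hz) n
    have := h.gnn z hz
    have := h.pos z hz
    gcongr
  have hC : ∀ n, ∫ z in Metric.ball (0 : ℂ) 1, g z * ((max (y z - lev n) 0) ^ 2 * y z ^ (γ - 1)) ≤
      ∫ z in Metric.ball (0 : ℂ) 1, g z * y z ^ (1 + γ) := fun n =>
    setIntegral_mono_on (hP n).2.1 hw hB (hle n)
  have t1 := mono_conv hB (fun n z => (1 - (1 - max (y z - lev n) 0 / y z) ^ 2) * gsq y z)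
    (gsq y) (fun n => (hP n).1)
    (fun n z hz => by
      have hp := h.pos z hz
      have h1 : max (y z - lev n) 0 / y z ≤ 1 := (div_le_one hp).2 (cut_le hp n)
      have h2 : 0 ≤ max (y z - lev n) 0 / y z := by positivity
      exact mul_nonneg (by nlinarith) (gsq_nonneg _ _))
    (fun z hz n m hnm => by
      have hp := h.pos z hz
      have h1 : max (y z - lev m) 0 / y z ≤ 1 := (div_le_one hp).2 (cut_le hp m)
      have h2 : max (y z - lev n) 0 / y z ≤ max (y z - lev m) 0 / y z :=
        div_le_div_of_nonneg_right (cut_mono (y z) hnm) hp.le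
      exact mul_le_mul_of_nonneg_right (by nlinarith) (gsq_nonneg _ _))
    (fun z hz => by
      have hp := h.pos z hz
      have := ((((cut_tendsto hp).div_const (y z)).const_sub 1).pow 2).const_sub 1 |>.mul_const
        (gsq y z)
      simpa [div_self hp.ne'] using this)
    _ (fun n => (hP n).2.2.le.trans (hC n))
  have t2 := mono_conv hB (fun n z => g z * ((max (y z - lev n) 0) ^ 2 * y z ^ (γ - 1)))
    (fun z => g z * y z ^ (1 + γ)) (fun n => (hP n).2.1)
    (fun n z hz => by
      have hp := h.pos z hz
      have hg := h.gnn z hz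
      positivity)
    (fun z hz n m hnm => by
      have hp := h.pos z hz
      have hg := h.gnn z hz
      have h2 := cut_mono (y z) hnm
      simp only at h2 ⊢
      gcongr)
    (fun z hz => by
      have hp := h.pos z hz
      have := (((cut_tendsto hp).pow 2).mul_const (y z ^ (γ - 1))).const_mul (g z)
      rwa [hpw z hz] at this)
    _ hC
  refine ⟨t1.1, tendsto_nhds_unique t1.2 ?_⟩
  simpa only [(hP _).2.2] using t2.2

lemma picone_ineq {γ : ℝ} (hγ0 : 0 ≤ γ) {g1 φ g y : ℂ → ℝ} (h1 : Sol γ g1 φ) (h : Sol γ g y) :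
    IntegrableOn (fun z => g z * (φ z ^ 2 * y z ^ (γ - 1))) (Metric.ball 0 1) ∧
    ∫ z in Metric.ball (0 : ℂ) 1, g z * (φ z ^ 2 * y z ^ (γ - 1)) ≤
      ∫ z in Metric.ball (0 : ℂ) 1, gsq φ z := by
  have hB : MeasurableSet (Metric.ball (0 : ℂ) 1) := measurableSet_ball
  have hP := fun n => picone_id h1 h (lev_pos n)
  have hC : ∀ n, ∫ z in Metric.ball (0 : ℂ) 1, g z * ((max (φ z - lev n) 0) ^ 2 * y z ^ (γ - 1)) ≤
      ∫ z in Metric.ball (0 : ℂ) 1, gsq φ z := by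
    intro n
    rw [← (hP n).2.2]
    refine setIntegral_mono_on (hP n).1 (sol_energy hγ0 h1).1 hB fun z _ => ?_
    unfold gsq
    nlinarith [sq_nonneg (fderiv ℝ φ z 1 - (max (φ z - lev n) 0 / y z) * fderiv ℝ y z 1),
      sq_nonneg (fderiv ℝ φ z Complex.I - (max (φ z - lev n) 0 / y z) * fderiv ℝ y z Complex.I)]
  have t2 := mono_conv hB (fun n z => g z * ((max (φ z - lev n) 0) ^ 2 * y z ^ (γ - 1)))
    (fun z => g z * (φ z ^ 2 * y z ^ (γ - 1))) (fun n => (hP n).2.1)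
    (fun n z hz => by
      have hp := h.pos z hz
      have hg := h.gnn z hz
      positivity)
    (fun z hz n m hnm => by
      have hp := h.pos z hz
      have hg := h.gnn z hz
      have h2 := cut_mono (φ z) hnm
      simp only at h2 ⊢
      gcongr)
    (fun z hz => (((cut_tendsto (h1.pos z hz)).pow 2).mul_const (y z ^ (γ - 1))).const_mul (g z))
    _ hC
  exact ⟨t2.1, le_of_tendsto' t2.2 hC⟩

/-- the solution `y` maximizes the energy functional -/
lemma energy_max {γ : ℝ} (hγ0 : 0 ≤ γ) (hγ1 : γ < 1) {g1 φ g y : ℂ → ℝ} (h1 : Sol γ g1 φ)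
    (h : Sol γ g y) :
    ∫ z in Metric.ball (0 : ℂ) 1, g z * φ z ^ (1 + γ) ≤
      (1 + γ) / 2 * (∫ z in Metric.ball (0 : ℂ) 1, gsq φ z) +
      (1 - γ) / 2 * ∫ z in Metric.ball (0 : ℂ) 1, gsq y z := by
  have hB : MeasurableSet (Metric.ball (0 : ℂ) 1) := measurableSet_ball
  obtain ⟨p1, p2⟩ := picone_ineq hγ0 h1 h
  have hw := integrableOn_weight hγ0 h h
  have hpt : ∀ z ∈ Metric.ball (0 : ℂ) 1, g z * φ z ^ (1 + γ) ≤
      (1 + γ) / 2 * (g z * (φ z ^ 2 * y z ^ (γ - 1))) + (1 - γ) / 2 * (g z * y z ^ (1 + γ)) := by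
    intro z hz
    have hφ := h1.pos z hz
    have hy := h.pos z hz
    have hg := h.gnn z hz
    have hy' := Real.geom_mean_le_arith_mean2_weighted (w₁ := (1 + γ) / 2) (w₂ := (1 - γ) / 2)
      (p₁ := φ z ^ 2 * y z ^ (γ - 1)) (p₂ := y z ^ (1 + γ)) (by linarith) (by linarith)
      (by positivity) (by positivity) (by ring)
    have hE : (φ z ^ 2 * y z ^ (γ - 1)) ^ ((1 + γ) / 2) * (y z ^ (1 + γ)) ^ ((1 - γ) / 2)
        = φ z ^ (1 + γ) := by
      rw [mul_rpow (by positivity) (by positivity), ← rpow_natCast (φ z) 2, ← rpow_mul hφ.le,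
        ← rpow_mul hy.le, ← rpow_mul hy.le, mul_assoc, ← rpow_add hy]
      have e1 : (γ - 1) * ((1 + γ) / 2) + (1 + γ) * ((1 - γ) / 2) = 0 := by ring
      have e2 : ((2 : ℕ) : ℝ) * ((1 + γ) / 2) = 1 + γ := by push_cast; ring
      rw [e1, e2]; simp
    rw [hE] at hy'
    nlinarith [mul_le_mul_of_nonneg_left hy' hg]
  have hsum : IntegrableOn (fun z => (1 + γ) / 2 * (g z * (φ z ^ 2 * y z ^ (γ - 1)))
      + (1 - γ) / 2 * (g z * y z ^ (1 + γ))) (Metric.ball 0 1) :=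
    Integrable.add (p1.const_mul ((1 + γ) / 2)) (hw.const_mul ((1 - γ) / 2))
  calc _ ≤ ∫ z in Metric.ball (0 : ℂ) 1, ((1 + γ) / 2 * (g z * (φ z ^ 2 * y z ^ (γ - 1)))
          + (1 - γ) / 2 * (g z * y z ^ (1 + γ))) :=
        setIntegral_mono_on (integrableOn_weight hγ0 h1 h)
          hsum hB hpt
    _ = (1 + γ) / 2 * (∫ z in Metric.ball (0 : ℂ) 1, g z * (φ z ^ 2 * y z ^ (γ - 1)))
          + (1 - γ) / 2 * ∫ z in Metric.ball (0 : ℂ) 1, g z * y z ^ (1 + γ) := by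
        rw [integral_add (p1.const_mul _) (hw.const_mul _), integral_const_mul, integral_const_mul]
    _ ≤ _ := by
        rw [(sol_energy hγ0 h).2]
        have : 0 ≤ (1 + γ) / 2 := by linarith
        gcongr

lemma gsq_const_mul (k : ℝ) (w : ℂ → ℝ) (z : ℂ) : gsq (fun x => k * w x) z = k ^ 2 * gsq w z := by
  have h : fderiv ℝ (fun x => k * w x) = fun x => k • fderiv ℝ w x :=
    fderiv_const_smul_field (𝕜 := ℝ) (f := w) k
  simp only [gsq, h]
  simp
  ring

lemma lapC_const_mul (k : ℝ) (w : ℂ → ℝ) (z : ℂ) : lapC (fun x => k * w x) z = k * lapC w z := by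
  have h : fderiv ℝ (fun x => k * w x) = fun x => k • fderiv ℝ w x :=
    fderiv_const_smul_field (𝕜 := ℝ) (f := w) k
  have h2 : fderiv ℝ (fun x => k • fderiv ℝ w x) z = k • fderiv ℝ (fderiv ℝ w) z :=
    congrFun (fderiv_const_smul_field (𝕜 := ℝ) (f := fderiv ℝ w) k) z
  simp only [lapC, h, h2]
  simp
  ring

lemma fderiv_comp_hol {u : ℂ → ℝ} {F : ℂ → ℂ} {z : ℂ} (hF : DifferentiableAt ℂ F z)
    (hu : DifferentiableAt ℝ u (F z)) (v : ℂ) :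
    fderiv ℝ (fun x => u (F x)) z v = fderiv ℝ u (F z) (deriv F z * v) := by
  have h := hu.hasFDerivAt.comp z hF.hasDerivAt.complexToReal_fderiv
  have h' : fderiv ℝ (fun x => u (F x)) z = _ := h.fderiv
  rw [h']; simp

lemma clm_complex (L : ℂ →L[ℝ] ℝ) (a : ℂ) : L a = a.re * L 1 + a.im * L Complex.I := by
  conv_lhs => rw [show a = a.re • (1 : ℂ) + a.im • Complex.I by
    apply Complex.ext <;> simp]
  rw [map_add, map_smul, map_smul]; simp

lemma gsq_comp {u : ℂ → ℝ} {F : ℂ → ℂ} {z : ℂ} (hF : DifferentiableAt ℂ F z)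
    (hu : DifferentiableAt ℝ u (F z)) :
    gsq (fun x => u (F x)) z = ‖deriv F z‖ ^ 2 * gsq u (F z) := by
  rw [gsq, fderiv_comp_hol hF hu, fderiv_comp_hol hF hu, gsq, ← Complex.normSq_eq_norm_sq,
    Complex.normSq_apply, clm_complex _ (deriv F z * 1), clm_complex _ (deriv F z * Complex.I)]
  simp
  ring

lemma lapC_comp {u : ℂ → ℝ} {F : ℂ → ℂ} {U O : Set ℂ} (hU : IsOpen U) (hO : IsOpen O)
    (hF : DifferentiableOn ℂ F U) (hm : Set.MapsTo F U O) (hu : ContDiffOn ℝ 2 u O)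
    {z : ℂ} (hz : z ∈ U) :
    lapC (fun x => u (F x)) z = ‖deriv F z‖ ^ 2 * lapC u (F z) := by
  have hDu : ContDiffOn ℝ 1 (fderiv ℝ u) O := hu.fderiv_of_isOpen hO (by norm_num)
  have hFd : ∀ x ∈ U, DifferentiableAt ℂ F x := fun x hx => hF.differentiableAt (hU.mem_nhds hx)
  have hud : ∀ x ∈ U, DifferentiableAt ℝ u (F x) := fun x hx =>
    (hu.contDiffAt (hO.mem_nhds (hm hx))).differentiableAt (by simp)
  have hw : ContDiffOn ℝ 2 (fun x => u (F x)) U := by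
    have hFr : ContDiffOn ℝ 2 F U := (hF.contDiffOn hU (n := 2)).restrict_scalars ℝ
    exact hu.comp hFr hm
  have hDw : DifferentiableAt ℝ (fderiv ℝ (fun x => u (F x))) z :=
    ((hw.fderiv_of_isOpen hU (m := 1) (by norm_num)).contDiffAt
      (hU.mem_nhds hz)).differentiableAt (by simp)
  have hF2 : HasDerivAt (deriv F) (deriv (deriv F) z) z :=
    ((hF.deriv hU).differentiableAt (hU.mem_nhds hz)).hasDerivAt
  have key : ∀ v, fderiv ℝ (fderiv ℝ (fun x => u (F x))) z v v =
      fderiv ℝ (fderiv ℝ u) (F z) (deriv F z * v) (deriv F z * v)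
      + fderiv ℝ u (F z) (deriv (deriv F) z * (v * v)) := by
    intro v
    have e1 : fderiv ℝ (fun x => fderiv ℝ (fun x => u (F x)) x v) z v =
        fderiv ℝ (fderiv ℝ (fun x => u (F x))) z v v := by
      rw [(hDw.hasFDerivAt.clm_apply (hasFDerivAt_const v z)).fderiv]; simp
    have e2 : (fun x => fderiv ℝ (fun x => u (F x)) x v) =ᶠ[nhds z]
        fun x => fderiv ℝ u (F x) (deriv F x * v) := by
      filter_upwards [hU.mem_nhds hz] with x hx
      exact fderiv_comp_hol (hFd x hx) (hud x hx) v
    have d1 : HasFDerivAt (fun x => fderiv ℝ u (F x)) _ z :=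
      (((hDu.contDiffAt (hO.mem_nhds (hm hz))).differentiableAt
        (by simp)).hasFDerivAt).comp z (hFd z hz).hasDerivAt.complexToReal_fderiv
    have d2 : HasFDerivAt (fun x => deriv F x * v) _ z :=
      (hF2.mul_const v).complexToReal_fderiv
    rw [← e1, e2.fderiv_eq, (d1.clm_apply d2).fderiv]
    simp
    rw [add_comm]
    congr 2
    ring
  have hB : ∀ a : ℂ, fderiv ℝ (fderiv ℝ u) (F z) a a =
      a.re ^ 2 * fderiv ℝ (fderiv ℝ u) (F z) 1 1
      + a.re * a.im * (fderiv ℝ (fderiv ℝ u) (F z) 1 Complex.I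
        + fderiv ℝ (fderiv ℝ u) (F z) Complex.I 1)
      + a.im ^ 2 * fderiv ℝ (fderiv ℝ u) (F z) Complex.I Complex.I := by
    intro a
    rw [clm_complex _ a]
    have h3 : ∀ b : ℂ, fderiv ℝ (fderiv ℝ u) (F z) a b = a.re * fderiv ℝ (fderiv ℝ u) (F z) 1 b
        + a.im * fderiv ℝ (fderiv ℝ u) (F z) Complex.I b := fun b =>
      clm_complex ((fderiv ℝ (fderiv ℝ u) (F z)).flip b) a
    rw [h3, h3]; ring
  rw [lapC, key, key, hB (deriv F z * 1), hB (deriv F z * Complex.I), lapC, ← Complex.normSq_eq_norm_sq, Complex.normSq_apply,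
    Complex.I_mul_I]
  simp
  ring

lemma det_smul_one (a : ℂ) : (a • (1 : ℂ →L[ℝ] ℂ)).det = ‖a‖ ^ 2 := by
  rw [← Complex.normSq_eq_norm_sq, ← Algebra.norm_complex_apply, Algebra.norm_apply]
  rfl

/-- conformal invariance of the Dirichlet integral -/
lemma dirichlet_conf {u : ℂ → ℝ} {F : ℂ → ℂ} {U : Set ℂ} (hU : IsOpen U)
    (hF : DifferentiableOn ℂ F U) (hinj : Set.InjOn F U)
    (hu : ∀ x ∈ U, DifferentiableAt ℝ u (F x)) :
    ∫ x in F '' U, ‖gradient u x‖ ^ 2 = ∫ z in U, gsq (fun x => u (F x)) z := by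
  have hFd : ∀ x ∈ U, DifferentiableAt ℂ F x := fun x hx => hF.differentiableAt (hU.mem_nhds hx)
  rw [integral_image_eq_integral_abs_det_fderiv_smul volume hU.measurableSet
    (f' := fun x => deriv F x • (1 : ℂ →L[ℝ] ℂ))
    (fun x hx => (hFd x hx).hasDerivAt.complexToReal_fderiv.hasFDerivWithinAt) hinj]
  refine setIntegral_congr_fun hU.measurableSet fun z hz => ?_
  rw [gsq_comp (hFd z hz) (hu z hz), det_smul_one, norm_gradient_sq, abs_of_nonneg (by positivity),
    smul_eq_mul]

lemma image_scale (f : ℂ → ℂ) {c : ℂ} (hc : c ≠ 0) :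
    (fun z => f (c * z)) '' Metric.ball 0 1 = f '' Metric.ball 0 ‖c‖ := by
  have hcp : 0 < ‖c‖ := norm_pos_iff.2 hc
  ext x
  constructor
  · rintro ⟨z, hz, rfl⟩
    refine ⟨c * z, ?_, rfl⟩
    simp only [mem_ball_zero_iff, norm_mul] at hz ⊢
    nlinarith
  · rintro ⟨z, hz, rfl⟩
    refine ⟨z / c, ?_, ?_⟩
    · simp only [mem_ball_zero_iff, norm_div] at hz ⊢
      exact (div_lt_one hcp).2 hz
    · simp only
      rw [mul_div_cancel₀ z hc]

lemma isOpen_image_ball {f : ℂ → ℂ} (hinj : Set.InjOn f (Metric.ball (0 : ℂ) 1))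
    (hf : DifferentiableOn ℂ f (Metric.ball (0 : ℂ) 1)) {r : ℝ} (hr1 : r < 1) :
    IsOpen (f '' Metric.ball 0 r) := by
  have ha : AnalyticOnNhd ℂ f (Metric.ball 0 1) := hf.analyticOnNhd Metric.isOpen_ball
  rcases ha.is_constant_or_isOpen (convex_ball _ _).isPreconnected with ⟨w, hw⟩ | h
  · exfalso
    have h0 : (0 : ℂ) ∈ Metric.ball (0 : ℂ) 1 := by simp
    have h1 : (1 / 2 : ℂ) ∈ Metric.ball (0 : ℂ) 1 := by simp; norm_num
    have := hinj h0 h1 (by rw [hw _ h0, hw _ h1])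
    norm_num at this
  · exact h _ (Metric.ball_subset_ball hr1.le) Metric.isOpen_ball

/-- the rescaled pull back of a torsion function -/
noncomputable def ysol (γ : ℝ) (f : ℂ → ℂ) (u : ℝ → ℂ → ℝ) (c : ℂ) (z : ℂ) : ℝ :=
  ‖c‖ ^ (-(2 / (1 - γ))) * u ‖c‖ (f (c * z))

lemma scale_mem {c z : ℂ} (hc1 : ‖c‖ < 1) (hz : z ∈ Metric.closedBall (0 : ℂ) 1) :
    c * z ∈ Metric.ball (0 : ℂ) 1 := by
  simp only [mem_closedBall_zero_iff, mem_ball_zero_iff, norm_mul] at *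
  nlinarith [norm_nonneg c, norm_nonneg z]

lemma ysol_sol {γ : ℝ} (hγ1 : γ < 1)
    {f : ℂ → ℂ} (hinj : Set.InjOn f (Metric.ball (0 : ℂ) 1))
    (hf : DifferentiableOn ℂ f (Metric.ball (0 : ℂ) 1))
    {u : ℝ → ℂ → ℝ}
    (htor : ∀ r ∈ Set.Ioo (0 : ℝ) 1, IsTorsionFnC γ (f '' Metric.ball (0 : ℂ) r) (u r))
    {c : ℂ} (hc : c ≠ 0) (hc1 : ‖c‖ < 1) :
    Sol γ (fun z => ‖deriv f (c * z)‖ ^ 2) (ysol γ f u c) ∧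
    ∫ z in Metric.ball (0 : ℂ) 1, gsq (ysol γ f u c) z = ‖c‖ ^ (-(4 / (1 - γ))) *
        ∫ z in f '' Metric.ball (0 : ℂ) ‖c‖, ‖gradient (u ‖c‖) z‖ ^ 2 := by
  have hcp : 0 < ‖c‖ := norm_pos_iff.2 hc
  obtain ⟨t1, -, t3, t4, t5, t6⟩ := htor ‖c‖ ⟨hcp, hc1⟩
  set r := ‖c‖ with hr
  have hO : IsOpen (f '' Metric.ball 0 r) := isOpen_image_ball hinj hf hc1
  set F : ℂ → ℂ := fun z => f (c * z) with hFdef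
  have him : F '' Metric.ball 0 1 = f '' Metric.ball 0 r := image_scale f hc
  have hB : IsOpen (Metric.ball (0 : ℂ) 1) := Metric.isOpen_ball
  have hsub : Metric.ball (0 : ℂ) 1 ⊆ Metric.closedBall 0 1 := Metric.ball_subset_closedBall
  have hm : Set.MapsTo F (Metric.ball 0 1) (f '' Metric.ball 0 r) := by
    rw [← him]; exact Set.mapsTo_image _ _
  have hFda : ∀ z ∈ Metric.closedBall (0 : ℂ) 1, HasDerivAt F (c * deriv f (c * z)) z := by
    intro z hz
    have h1 := (hf.differentiableAt (hB.mem_nhds (scale_mem hc1 hz))).hasDerivAt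
    have h2 : HasDerivAt (fun z : ℂ => c * z) c z := by
      simpa using (hasDerivAt_id z).const_mul c
    have := HasDerivAt.comp z h1 h2
    rw [mul_comm]; exact this
  have hFd : DifferentiableOn ℂ F (Metric.ball 0 1) := fun z hz =>
    (hFda z (hsub hz)).differentiableAt.differentiableWithinAt
  have hFinj : Set.InjOn F (Metric.closedBall 0 1) := by
    intro a ha b hb hab
    exact mul_left_cancel₀ hc (hinj (scale_mem hc1 ha) (scale_mem hc1 hb) hab)
  have hFc : ContinuousOn F (Metric.closedBall 0 1) := fun z hz =>
    (hFda z hz).continuousAt.continuousWithinAt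
  have hFcl : Set.MapsTo F (Metric.closedBall 0 1) (closure (f '' Metric.ball 0 r)) := by
    rw [← him, ← closure_ball (0 : ℂ) one_ne_zero]
    refine Set.MapsTo.closure_of_continuousOn (Set.mapsTo_image _ _) ?_
    rwa [closure_ball (0 : ℂ) one_ne_zero]
  have hFfr : ∀ z ∈ Metric.closedBall (0 : ℂ) 1, z ∉ Metric.ball (0 : ℂ) 1 →
      F z ∈ frontier (f '' Metric.ball 0 r) := by
    intro z hz hz'
    rw [frontier, hO.interior_eq]
    refine ⟨hFcl hz, ?_⟩
    rw [← him]
    rintro ⟨w, hw, hwz⟩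
    exact hz' (hFinj (hsub hw) hz hwz ▸ hw)
  set κ : ℝ := r ^ (-(2 / (1 - γ))) with hκ
  have hκp : 0 < κ := rpow_pos_of_pos hcp _
  have hyeq : ysol γ f u c = fun z => κ * u r (F z) := rfl
  have hycont : ContinuousOn (ysol γ f u c) (Metric.closedBall 0 1) := by
    rw [hyeq]; exact continuousOn_const.mul (t1.comp hFc hFcl)
  have hg : ContinuousOn (fun z => ‖deriv f (c * z)‖ ^ 2) (Metric.closedBall 0 1) := by
    refine ContinuousOn.pow (ContinuousOn.norm ?_) 2
    exact (hf.deriv hB).continuousOn.comp (by fun_prop) fun z hz => scale_mem hc1 hz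
  have hκ2 : κ * r ^ 2 = κ ^ γ := by
    rw [hκ, ← rpow_mul hcp.le, ← rpow_natCast r 2, ← rpow_add hcp]
    congr 1
    have : 1 - γ ≠ 0 := by linarith
    push_cast
    field_simp
    ring
  refine ⟨⟨?_, ?_, ?_, ?_, hg.mono hsub, fun z _ => by positivity, ?_⟩, ?_⟩
  · rw [hyeq]
    exact contDiffOn_const.mul (t3.comp ((hFd.contDiffOn hB (n := 2)).restrict_scalars ℝ) hm)
  · intro z hz
    exact mul_pos hκp (t5 _ (hm hz))
  · intro ε hε
    refine ⟨Metric.closedBall 0 1 ∩ (ysol γ f u c) ⁻¹' Set.Ici ε, ?_, ?_, ?_⟩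
    · exact (isCompact_closedBall (0 : ℂ) 1).of_isClosed_subset
        (hycont.preimage_isClosed_of_isClosed Metric.isClosed_closedBall isClosed_Ici)
        Set.inter_subset_left
    · rintro z ⟨hz, hz2⟩
      by_contra hcon
      have h0 : ysol γ f u c z = 0 := by
        rw [hyeq]; simp only; rw [t6 _ (hFfr z hz hcon), mul_zero]
      rw [Set.mem_preimage, h0, Set.mem_Ici] at hz2
      linarith
    · intro z hz hz2
      by_contra hcon
      exact hz2 ⟨hsub hz, not_lt.1 hcon⟩
  · intro z hz
    have hpos := t5 _ (hm hz)
    rw [hyeq, lapC_const_mul, lapC_comp hB hO hFd hm t3 hz, t4 _ (hm hz), (hFda z (hsub hz)).deriv,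
      norm_mul, mul_rpow hκp.le hpos.le, ← hκ2]
    ring
  · obtain ⟨C, hC⟩ := (isCompact_closedBall (0 : ℂ) 1).exists_bound_of_continuousOn hg
    exact ⟨C, fun z hz => (le_abs_self _).trans (hC z (hsub hz))⟩
  · rw [← him, dirichlet_conf hB hFd (hFinj.mono hsub)
      (fun x hx => (t3.contDiffAt (hO.mem_nhds (hm hx))).differentiableAt (by simp)),
      ← integral_const_mul]
    refine setIntegral_congr_fun hB.measurableSet fun z _ => ?_
    rw [hyeq, gsq_const_mul]
    congr 1
    rw [hκ, ← rpow_natCast, ← rpow_mul hcp.le]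
    congr 1
    push_cast
    ring

lemma circ_mul_mem {b : ℝ} (hb0 : 0 < b) (hb1 : b < 1) {z : ℂ} (hz : z ∈ Metric.ball (0 : ℂ) 1)
    {ζ : ℂ} (hζ : ζ ∈ Metric.closedBall (0 : ℂ) b) : ζ * z ∈ Metric.closedBall (0 : ℂ) b := by
  simp only [mem_closedBall_zero_iff, mem_ball_zero_iff, norm_mul] at *
  nlinarith [norm_nonneg ζ, norm_nonneg z]

lemma circ_mem {b : ℝ} (hb0 : 0 < b) (θ : ℝ) : circleMap 0 b θ ∈ Metric.closedBall (0 : ℂ) b := by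
  simp [abs_of_pos hb0]

/-- the Poisson weight on the circle of radius `b`, at the point `a` -/
noncomputable def pw (a b : ℝ) (θ : ℝ) : ℝ := poissonKernel 0 (a : ℂ) (circleMap 0 b θ)

lemma circ_ne {a b : ℝ} (ha : 0 < a) (hab : a < b) (θ : ℝ) : circleMap 0 b θ - (a : ℂ) ≠ 0 := by
  intro h
  have h1 : ‖circleMap 0 b θ‖ = ‖(a : ℂ)‖ := by rw [sub_eq_zero.1 h]
  simp [abs_of_pos ha, abs_of_pos (ha.trans hab)] at h1
  linarith

lemma pw_pos {a b : ℝ} (ha : 0 < a) (hab : a < b) (θ : ℝ) : 0 < pw a b θ := by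
  have h0 := circ_ne ha hab θ
  rw [pw, poissonKernel_def]
  simp only [sub_zero]
  refine div_pos ?_ (by positivity)
  simp
  nlinarith

lemma pw_cont {a b : ℝ} (ha : 0 < a) (hab : a < b) : Continuous (pw a b) := by
  have : pw a b = fun θ => (‖circleMap 0 b θ - 0‖ ^ 2 - ‖(a : ℂ) - 0‖ ^ 2)
      / ‖(circleMap 0 b θ - 0) - ((a : ℂ) - 0)‖ ^ 2 := rfl
  rw [this]
  refine Continuous.div (by fun_prop) (by fun_prop) fun θ => ?_
  have h0 := circ_ne ha hab θ
  simp only [sub_zero]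
  positivity

lemma poisson_int {a b : ℝ} (ha : 0 < a) (hab : a < b) {k : ℂ → ℂ}
    (hk : DiffContOnCl ℂ k (Metric.ball 0 b)) :
    ∫ θ in (0 : ℝ)..(2 * π), pw a b θ • k (circleMap 0 b θ) = (2 * π) • k a := by
  have h := hk.circleAverage_poissonKernel_smul (w := (a : ℂ)) (by simp [abs_of_pos ha, hab])
  rw [← h, circleAverage_def, smul_smul, mul_inv_cancel₀ (by positivity), one_smul]
  rfl

lemma pw_int {a b : ℝ} (ha : 0 < a) (hab : a < b) :
    ∫ θ in (0 : ℝ)..(2 * π), pw a b θ = 2 * π := by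
  have h := poisson_int ha hab (k := fun _ => 1) diffContOnCl_const
  have h2 : ((∫ θ in (0 : ℝ)..(2 * π), pw a b θ : ℝ) : ℂ) = ((2 * π : ℝ) : ℂ) := by
    rw [← intervalIntegral.integral_ofReal]
    simpa using h
  exact_mod_cast h2

lemma poisson_var {a b : ℝ} (ha : 0 < a) (hab : a < b) {k : ℂ → ℂ}
    (hk : DiffContOnCl ℂ k (Metric.ball 0 b)) (hkc : ContinuousOn k (Metric.closedBall 0 b)) :
    ∫ θ in (0 : ℝ)..(2 * π), pw a b θ * ‖k (circleMap 0 b θ)‖ ^ 2 =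
    (∫ θ in (0 : ℝ)..(2 * π), pw a b θ * ‖k (circleMap 0 b θ) - k a‖ ^ 2)
      + 2 * π * ‖k a‖ ^ 2 := by
  have hc : Continuous fun θ => k (circleMap 0 b θ) :=
    hkc.comp_continuous (continuous_circleMap 0 b) fun θ => circ_mem (ha.trans hab) θ
  have hp := pw_cont ha hab
  have hin : ∫ θ in (0 : ℝ)..(2 * π), pw a b θ * inner ℝ (k a) (k (circleMap 0 b θ))
      = 2 * π * ‖k a‖ ^ 2 := by
    have h1 := (innerSL ℝ (k a)).intervalIntegral_comp_comm
      (f := fun θ => pw a b θ • k (circleMap 0 b θ)) (μ := volume) (a := 0) (b := 2 * π)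
      ((hp.smul hc).intervalIntegrable _ _)
    rw [poisson_int ha hab hk] at h1
    simp only [innerSL_apply_apply, inner_smul_right, real_inner_self_eq_norm_sq] at h1
    simpa [inner_smul_right] using h1
  have hE : ∀ θ, pw a b θ * ‖k (circleMap 0 b θ)‖ ^ 2 =
      pw a b θ * ‖k (circleMap 0 b θ) - k a‖ ^ 2
      + (2 * (pw a b θ * inner ℝ (k a) (k (circleMap 0 b θ))) - pw a b θ * ‖k a‖ ^ 2) := by
    intro θ
    rw [norm_sub_sq_real, real_inner_comm]; ring
  have hc1 : Continuous fun θ => pw a b θ * ‖k (circleMap 0 b θ) - k a‖ ^ 2 :=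
    hp.mul ((hc.sub continuous_const).norm.pow 2)
  have hc2 : Continuous fun θ => 2 * (pw a b θ * inner ℝ (k a) (k (circleMap 0 b θ))) :=
    continuous_const.mul (hp.mul (continuous_const.inner hc))
  have hc3 : Continuous fun θ => pw a b θ * ‖k a‖ ^ 2 := hp.mul continuous_const
  simp only [hE]
  rw [intervalIntegral.integral_add, intervalIntegral.integral_sub,
    intervalIntegral.integral_const_mul, intervalIntegral.integral_mul_const, hin, pw_int ha hab]
  · ring
  all_goals
    first
    | exact hc1.intervalIntegrable _ _
    | exact hc2.intervalIntegrable _ _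
    | exact hc3.intervalIntegrable _ _
    | exact (hc2.sub hc3).intervalIntegrable _ _

lemma kfun_diff {h : ℂ → ℂ} (hh : DifferentiableOn ℂ h (Metric.ball 0 1)) {b : ℝ} (hb0 : 0 < b)
    (hb1 : b < 1) {z : ℂ} (hz : z ∈ Metric.ball (0 : ℂ) 1) :
    DiffContOnCl ℂ (fun ζ => h (ζ * z)) (Metric.ball 0 b) ∧
    ContinuousOn (fun ζ => h (ζ * z)) (Metric.closedBall 0 b) := by
  have hd : DifferentiableOn ℂ (fun ζ => h (ζ * z)) (Metric.closedBall 0 b) := by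
    refine hh.comp (by fun_prop) fun ζ hζ => ?_
    exact Metric.closedBall_subset_ball hb1 (circ_mul_mem hb0 hb1 hz hζ)
  refine ⟨?_, hd.continuousOn⟩
  refine DifferentiableOn.diffContOnCl ?_
  rwa [closure_ball (0 : ℂ) (ne_of_gt hb0)]

/-- Main inequality with the variance term. -/
lemma main_var {γ : ℝ} (hγ0 : 0 ≤ γ) (hγ1 : γ < 1) {a b : ℝ} (ha : 0 < a) (hab : a < b)
    (hb1 : b < 1) {h : ℂ → ℂ} (hh : DifferentiableOn ℂ h (Metric.ball 0 1))
    {φ : ℂ → ℝ} (hφ : Sol γ (fun z => ‖h (a * z)‖ ^ 2) φ) (M : ℝ)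
    (hM : ∀ θ, ∫ z in Metric.ball (0 : ℂ) 1, ‖h (circleMap 0 b θ * z)‖ ^ 2 * φ z ^ (1 + γ) ≤ M) :
    IntegrableOn (fun z => φ z ^ (1 + γ) *
      ∫ θ in (0 : ℝ)..(2 * π), pw a b θ * ‖h (circleMap 0 b θ * z) - h (a * z)‖ ^ 2)
      (Metric.ball 0 1) ∧
    (∫ z in Metric.ball (0 : ℂ) 1, φ z ^ (1 + γ) *
      ∫ θ in (0 : ℝ)..(2 * π), pw a b θ * ‖h (circleMap 0 b θ * z) - h (a * z)‖ ^ 2)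
      + 2 * π * (∫ z in Metric.ball (0 : ℂ) 1, gsq φ z) ≤ 2 * π * M := by
  have hb0 : 0 < b := ha.trans hab
  have hB : MeasurableSet (Metric.ball (0 : ℂ) 1) := measurableSet_ball
  have h2π : (0 : ℝ) ≤ 2 * π := by positivity
  have hp := pw_cont ha hab
  set J : ℂ → ℝ → ℝ := fun z θ => φ z ^ (1 + γ) * (pw a b θ * ‖h (circleMap 0 b θ * z)‖ ^ 2)
    with hJ
  have hJc : ContinuousOn (Function.uncurry J) (Metric.ball (0 : ℂ) 1 ×ˢ Set.Ioc 0 (2 * π)) := by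
    refine ContinuousOn.mul ?_ (ContinuousOn.mul ?_ (ContinuousOn.pow (ContinuousOn.norm ?_) 2))
    · exact (hφ.c2.continuousOn.rpow_const fun z hz => Or.inl (hφ.pos z hz).ne').comp
        continuousOn_fst fun x hx => hx.1
    · exact (hp.comp continuous_snd).continuousOn
    · refine hh.continuousOn.comp (f := fun x : ℂ × ℝ => circleMap 0 b x.2 * x.1)
        (Continuous.continuousOn (by fun_prop)) fun x hx => ?_
      exact Metric.closedBall_subset_ball hb1 (circ_mul_mem hb0 hb1 hx.1 (circ_mem hb0 _))
  have hJi : Integrable (Function.uncurry J) ((volume.restrict (Metric.ball (0 : ℂ) 1)).prod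
      (volume.restrict (Set.Ioc 0 (2 * π)))) := by
    obtain ⟨C3, hC30, hC3⟩ := hφ.bdd
    obtain ⟨C1, hC1⟩ := (isCompact_Icc (a := (0 : ℝ)) (b := 2 * π)).exists_bound_of_continuousOn
      hp.continuousOn
    obtain ⟨C2, hC2⟩ := (isCompact_closedBall (0 : ℂ) b).exists_bound_of_continuousOn
      (hh.continuousOn.mono (Metric.closedBall_subset_ball hb1))
    rw [Measure.prod_restrict]
    have hm : MeasurableSet (Metric.ball (0 : ℂ) 1 ×ˢ Set.Ioc 0 (2 * π)) :=
      hB.prod measurableSet_Ioc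
    refine IntegrableOn.of_bound ?_ (hJc.aestronglyMeasurable hm) (C3 ^ (1 + γ) * (C1 * C2 ^ 2))
      ((ae_restrict_iff' hm).2 (Filter.Eventually.of_forall ?_))
    · rw [Measure.prod_prod]
      exact ENNReal.mul_lt_top measure_ball_lt_top measure_Ioc_lt_top
    · rintro ⟨z, θ⟩ ⟨hz, hθ⟩
      have e1 := hφ.pos z hz
      have e2 := hC1 θ ⟨hθ.1.le, hθ.2⟩
      have e3 := hC2 _ (circ_mul_mem hb0 hb1 hz (circ_mem hb0 θ))
      have e4 := pw_pos ha hab θ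
      rw [Real.norm_of_nonneg e4.le] at e2
      simp only [Function.uncurry, hJ]
      rw [Real.norm_of_nonneg (by positivity)]
      have e5 := hC3 z hz
      have e6 : 0 ≤ C1 := e4.le.trans e2
      gcongr
  have hswap := integral_integral_swap hJi
  have hL : ∀ z ∈ Metric.ball (0 : ℂ) 1, ∫ θ in Set.Ioc 0 (2 * π), J z θ =
      φ z ^ (1 + γ) * (∫ θ in (0 : ℝ)..(2 * π), pw a b θ *
        ‖h (circleMap 0 b θ * z) - h (a * z)‖ ^ 2)
      + 2 * π * (‖h (a * z)‖ ^ 2 * φ z ^ (1 + γ)) := by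
    intro z hz
    obtain ⟨k1, k2⟩ := kfun_diff hh hb0 hb1 hz
    have := poisson_var ha hab k1 k2
    simp only [hJ]
    rw [integral_const_mul, ← intervalIntegral.integral_of_le h2π, this]
    ring
  have hw := (integrableOn_weight hγ0 hφ hφ).const_mul (2 * π)
  have hLi : IntegrableOn (fun z => ∫ θ in Set.Ioc 0 (2 * π), J z θ) (Metric.ball 0 1) :=
    hJi.integral_prod_left
  have hVi : IntegrableOn (fun z => φ z ^ (1 + γ) *
      ∫ θ in (0 : ℝ)..(2 * π), pw a b θ * ‖h (circleMap 0 b θ * z) - h (a * z)‖ ^ 2)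
      (Metric.ball 0 1) := by
    refine (hLi.sub hw).congr_fun (fun z hz => ?_) hB
    simp only [Pi.sub_apply]
    rw [hL z hz]; ring
  refine ⟨hVi, ?_⟩
  rw [setIntegral_congr_fun hB hL, integral_add hVi hw, integral_const_mul,
    ← (sol_energy hγ0 hφ).2] at hswap
  rw [hswap]
  have hRi : IntegrableOn (fun θ => ∫ z in Metric.ball (0 : ℂ) 1, J z θ) (Set.Ioc 0 (2 * π)) :=
    hJi.integral_prod_right
  calc _ ≤ ∫ θ in Set.Ioc 0 (2 * π), pw a b θ * M := by
        refine setIntegral_mono_on hRi ?_ measurableSet_Ioc fun θ _ => ?_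
        · exact (hp.mul continuous_const).integrableOn_Ioc
        · have : ∫ z in Metric.ball (0 : ℂ) 1, J z θ = pw a b θ *
              ∫ z in Metric.ball (0 : ℂ) 1, ‖h (circleMap 0 b θ * z)‖ ^ 2 * φ z ^ (1 + γ) := by
            rw [← integral_const_mul]
            congr 1; ext z; simp only [hJ]; ring
          rw [this]
          exact mul_le_mul_of_nonneg_left (hM θ) (pw_pos ha hab θ).le
    _ = 2 * π * M := by
        rw [integral_mul_const, ← intervalIntegral.integral_of_le h2π, pw_int ha hab]

/-- vanishing of the variance term -/
lemma var_zero {γ : ℝ} {a b : ℝ} (ha : 0 < a) (hab : a < b)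
    (hb1 : b < 1) {h : ℂ → ℂ} (hh : DifferentiableOn ℂ h (Metric.ball 0 1))
    {φ : ℂ → ℝ} (hφ : ∀ z ∈ Metric.ball (0 : ℂ) 1, 0 < φ z)
    (hi : IntegrableOn (fun z => φ z ^ (1 + γ) *
      ∫ θ in (0 : ℝ)..(2 * π), pw a b θ * ‖h (circleMap 0 b θ * z) - h (a * z)‖ ^ 2)
      (Metric.ball 0 1))
    (h0 : ∫ z in Metric.ball (0 : ℂ) 1, φ z ^ (1 + γ) *
      ∫ θ in (0 : ℝ)..(2 * π), pw a b θ * ‖h (circleMap 0 b θ * z) - h (a * z)‖ ^ 2 ≤ 0) :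
    ∀ z ∈ Metric.ball (0 : ℂ) 1, h (b * z) = h (a * z) := by
  have hb0 : 0 < b := ha.trans hab
  have hB : IsOpen (Metric.ball (0 : ℂ) 1) := Metric.isOpen_ball
  have h2π : (0 : ℝ) < 2 * π := by positivity
  have hnn : ∀ z, 0 ≤ ∫ θ in (0 : ℝ)..(2 * π), pw a b θ *
      ‖h (circleMap 0 b θ * z) - h (a * z)‖ ^ 2 := fun z =>
    intervalIntegral.integral_nonneg h2π.le fun θ _ =>
      mul_nonneg (pw_pos ha hab θ).le (by positivity)
  have hnn' : 0 ≤ᵐ[volume.restrict (Metric.ball (0 : ℂ) 1)] (fun z => φ z ^ (1 + γ) *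
      ∫ θ in (0 : ℝ)..(2 * π), pw a b θ * ‖h (circleMap 0 b θ * z) - h (a * z)‖ ^ 2) := by
    refine (ae_restrict_iff' hB.measurableSet).2 (Filter.Eventually.of_forall fun z hz => ?_)
    have := hφ z hz
    exact mul_nonneg (by positivity) (hnn z)
  have hz0 := (setIntegral_eq_zero_iff_of_nonneg_ae hnn' hi).1
    (le_antisymm h0 (integral_nonneg_of_ae hnn'))
  have hsc : ∀ c : ℝ, 0 < c → c < 1 → ContinuousOn (fun z : ℂ => h (c * z)) (Metric.ball 0 1) := by
    intro c hc0 hc1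
    refine hh.continuousOn.comp (by fun_prop) fun z hz => ?_
    exact scale_mem (by simpa [abs_of_pos hc0] using hc1) (Metric.ball_subset_closedBall hz)
  have hae : (fun z : ℂ => h (b * z)) =ᵐ[volume.restrict (Metric.ball (0 : ℂ) 1)]
      fun z => h (a * z) := by
    filter_upwards [hz0, ae_restrict_mem hB.measurableSet] with z hz hzB
    have hφz := hφ z hzB
    have hVz : ∫ θ in (0 : ℝ)..(2 * π), pw a b θ *
      ‖h (circleMap 0 b θ * z) - h (a * z)‖ ^ 2 = 0 := by
      rcases mul_eq_zero.1 hz with h' | h'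
      · exact absurd h' (by positivity)
      · exact h'
    by_contra hne
    have hc : Continuous fun θ => h (circleMap 0 b θ * z) :=
      (kfun_diff hh hb0 hb1 hzB).2.comp_continuous (continuous_circleMap 0 b)
        fun θ => circ_mem hb0 θ
    have hp := pw_cont ha hab
    have := intervalIntegral.integral_pos h2π
      (f := fun θ => pw a b θ * ‖h (circleMap 0 b θ * z) - h (a * z)‖ ^ 2)
      (Continuous.continuousOn (hp.mul ((hc.sub continuous_const).norm.pow 2)))
      (fun θ _ => mul_nonneg (pw_pos ha hab θ).le (by positivity))
      ⟨0, ⟨le_rfl, h2π.le⟩, by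
        have h1 : circleMap 0 b 0 = (b : ℂ) := by simp [circleMap]
        rw [h1]
        have h2 : h (b * z) - h (a * z) ≠ 0 := sub_ne_zero.2 hne
        have := pw_pos ha hab 0
        positivity⟩
    linarith
  exact Measure.eqOn_open_of_ae_eq hae hB (hsc b hb0 hb1) (hsc a ha (hab.trans hb1))

/-- a holomorphic function with `h (b z) = h (a z)` is constant -/
lemma const_of_scale {a b : ℝ} (ha : 0 < a) (hab : a < b)
    (hb1 : b < 1) {h : ℂ → ℂ} (hh : DifferentiableOn ℂ h (Metric.ball 0 1))
    (he : ∀ z ∈ Metric.ball (0 : ℂ) 1, h (b * z) = h (a * z)) :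
    ∀ z ∈ Metric.ball (0 : ℂ) 1, h z = h 0 := by
  have hb0 : 0 < b := ha.trans hab
  have hbc : (b : ℂ) ≠ 0 := by exact_mod_cast hb0.ne'
  set s : ℂ := (a : ℂ) / b with hs
  have hs1 : ‖s‖ < 1 := by
    rw [hs, norm_div]
    simp only [Complex.norm_real, Real.norm_eq_abs, abs_of_pos ha, abs_of_pos hb0]
    exact (div_lt_one hb0).2 hab
  have hstep : ∀ z ∈ Metric.ball (0 : ℂ) b, h z = h (s * z) := by
    intro z hz
    have := he (z / b) (by
      rw [mem_ball_zero_iff] at *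
      rw [norm_div, Complex.norm_real, Real.norm_eq_abs, abs_of_pos hb0]
      exact (div_lt_one hb0).2 hz)
    rw [mul_div_cancel₀ z hbc] at this
    rw [this, hs]; congr 1; ring
  have hmem : ∀ z ∈ Metric.ball (0 : ℂ) b, ∀ n : ℕ, s ^ n * z ∈ Metric.ball (0 : ℂ) b := by
    intro z hz n
    simp only [mem_ball_zero_iff, norm_mul, norm_pow] at *
    have := pow_le_one₀ (n := n) (norm_nonneg s) hs1.le
    nlinarith [norm_nonneg z]
  have hiter : ∀ z ∈ Metric.ball (0 : ℂ) b, ∀ n : ℕ, h z = h (s ^ n * z) := by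
    intro z hz n
    induction n with
    | zero => simp
    | succ n ih =>
      rw [ih, hstep _ (hmem z hz n)]; congr 1; ring
  have hcb : ∀ z ∈ Metric.ball (0 : ℂ) b, h z = h 0 := by
    intro z hz
    have ht : Filter.Tendsto (fun n : ℕ => s ^ n * z) Filter.atTop (nhds 0) := by
      simpa using (tendsto_pow_atTop_nhds_zero_of_norm_lt_one hs1).mul_const z
    have hc0 : ContinuousAt h 0 :=
      hh.continuousOn.continuousAt (Metric.isOpen_ball.mem_nhds (by simp))
    have ht2 := hc0.tendsto.comp ht
    refine tendsto_nhds_unique (f := fun _ : ℕ => h z) tendsto_const_nhds (ht2.congr fun n => ?_)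
    exact (hiter z hz n).symm
  have hA : AnalyticOnNhd ℂ h (Metric.ball 0 1) := hh.analyticOnNhd Metric.isOpen_ball
  exact hA.eqOn_of_preconnected_of_eventuallyEq (g := fun _ => h 0) analyticOnNhd_const
    (convex_ball _ _).isPreconnected (z₀ := 0) (by simp)
    (by filter_upwards [Metric.ball_mem_nhds (0 : ℂ) hb0] with z hz using hcb z hz)

lemma affine_of_deriv {f : ℂ → ℂ} (hf : DifferentiableOn ℂ f (Metric.ball (0 : ℂ) 1))
    (hc : ∀ z ∈ Metric.ball (0 : ℂ) 1, deriv f z = deriv f 0) :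
    ∃ a b : ℂ, ∀ z ∈ Metric.ball (0 : ℂ) 1, f z = a * z + b := by
  have hB : IsOpen (Metric.ball (0 : ℂ) 1) := Metric.isOpen_ball
  have hd : ∀ z ∈ Metric.ball (0 : ℂ) 1, HasDerivAt (fun z => f z - deriv f 0 * z) 0 z := by
    intro z hz
    have h1 := (hf.differentiableAt (hB.mem_nhds hz)).hasDerivAt
    rw [hc z hz] at h1
    simpa using h1.fun_sub ((hasDerivAt_id z).const_mul (deriv f 0))
  refine ⟨deriv f 0, f 0, fun z hz => ?_⟩
  have := hB.is_const_of_deriv_eq_zero (convex_ball (0 : ℂ) 1).isPreconnected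
    (f := fun z => f z - deriv f 0 * z)
    (fun z hz => (hd z hz).differentiableAt.differentiableWithinAt)
    (fun z hz => (hd z hz).deriv) hz (y := 0) (by simp)
  simp only [mul_zero, sub_zero] at this
  rw [← this]; ring

lemma schwarz_key (γ : ℝ) (hγ0 : 0 ≤ γ) (hγ1 : γ < 1)
    (f : ℂ → ℂ) (hinj : Set.InjOn f (Metric.ball (0 : ℂ) 1))
    (hf : DifferentiableOn ℂ f (Metric.ball (0 : ℂ) 1))
    (u : ℝ → ℂ → ℝ)
    (htor : ∀ r ∈ Set.Ioo (0 : ℝ) 1, IsTorsionFnC γ (f '' Metric.ball (0 : ℂ) r) (u r))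
    {a b : ℝ} (ha : 0 < a) (hab : a < b) (hb1 : b < 1) :
    (a ^ (-(4 / (1 - γ))) * ∫ z in f '' Metric.ball (0 : ℂ) a, ‖gradient (u a) z‖ ^ 2) ≤
      (b ^ (-(4 / (1 - γ))) * ∫ z in f '' Metric.ball (0 : ℂ) b, ‖gradient (u b) z‖ ^ 2) ∧
    ((¬ ∃ p q : ℂ, ∀ z ∈ Metric.ball (0 : ℂ) 1, f z = p * z + q) →
    (a ^ (-(4 / (1 - γ))) * ∫ z in f '' Metric.ball (0 : ℂ) a, ‖gradient (u a) z‖ ^ 2) <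
      (b ^ (-(4 / (1 - γ))) * ∫ z in f '' Metric.ball (0 : ℂ) b, ‖gradient (u b) z‖ ^ 2)) := by
  have hb0 : 0 < b := ha.trans hab
  have hna : ‖(a : ℂ)‖ = a := by simp [abs_of_pos ha]
  have hac : (a : ℂ) ≠ 0 := by exact_mod_cast ha.ne'
  have hh : DifferentiableOn ℂ (deriv f) (Metric.ball 0 1) := hf.deriv Metric.isOpen_ball
  obtain ⟨s1, e1⟩ := ysol_sol hγ1 hinj hf htor hac (by rw [hna]; linarith)
  rw [hna] at e1
  set S1 := a ^ (-(4 / (1 - γ))) * ∫ z in f '' Metric.ball (0 : ℂ) a, ‖gradient (u a) z‖ ^ 2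
  set S2 := b ^ (-(4 / (1 - γ))) * ∫ z in f '' Metric.ball (0 : ℂ) b, ‖gradient (u b) z‖ ^ 2
    with hS2
  have hM : ∀ θ, ∫ z in Metric.ball (0 : ℂ) 1, ‖deriv f (circleMap 0 b θ * z)‖ ^ 2 *
      ysol γ f u a z ^ (1 + γ) ≤ (1 + γ) / 2 * S1 + (1 - γ) / 2 * S2 := by
    intro θ
    have hnb : ‖circleMap 0 b θ‖ = b := by simp [abs_of_pos hb0]
    obtain ⟨s2, e2⟩ := ysol_sol hγ1 hinj hf htor (c := circleMap 0 b θ)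
      (norm_pos_iff.1 (by rw [hnb]; exact hb0)) (by rw [hnb]; exact hb1)
    rw [hnb, ← hS2] at e2
    have := energy_max hγ0 hγ1 s1 s2
    rwa [e1, e2] at this
  obtain ⟨hi, hle⟩ := main_var hγ0 hγ1 ha hab hb1 hh s1 _ hM
  rw [e1] at hle
  have hnn : 0 ≤ ∫ z in Metric.ball (0 : ℂ) 1, ysol γ f u a z ^ (1 + γ) *
      ∫ θ in (0 : ℝ)..(2 * π), pw a b θ *
        ‖deriv f (circleMap 0 b θ * z) - deriv f (a * z)‖ ^ 2 := by
    refine setIntegral_nonneg measurableSet_ball fun z hz => mul_nonneg ?_ ?_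
    · exact rpow_nonneg (s1.pos z hz).le _
    · exact intervalIntegral.integral_nonneg (by positivity) fun θ _ =>
        mul_nonneg (pw_pos ha hab θ).le (by positivity)
  have hcoef : 0 < π * (1 - γ) := mul_pos pi_pos (by linarith)
  have hle2 : (∫ z in Metric.ball (0 : ℂ) 1, ysol γ f u a z ^ (1 + γ) *
      ∫ θ in (0 : ℝ)..(2 * π), pw a b θ *
        ‖deriv f (circleMap 0 b θ * z) - deriv f (a * z)‖ ^ 2) ≤ π * (1 - γ) * (S2 - S1) := by
    linarith
  have hmono : S1 ≤ S2 := by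
    by_contra hcon
    have : π * (1 - γ) * (S2 - S1) < 0 := mul_neg_of_pos_of_neg hcoef (by linarith)
    linarith
  refine ⟨hmono, fun hna => lt_of_le_of_ne hmono fun heq => hna ?_⟩
  rw [heq, sub_self, mul_zero] at hle2
  exact affine_of_deriv hf (const_of_scale ha hab hb1 hh
    (var_zero ha hab hb1 hh s1.pos hi hle2))

/-- The forward Schwarz-type lemma for the `γ`-torsional rigidity:
`r ↦ T_γ(f(B(0,r))) / r^{4/(1-γ)}` is monotone increasing on `(0,1)`, strictly
unless `f` is linear. -/
theorem torsional_rigidity_schwarz_lemma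
    (γ : ℝ) (hγ0 : 0 ≤ γ) (hγ1 : γ < 1)
    (f : ℂ → ℂ) (hinj : Set.InjOn f (Metric.ball (0 : ℂ) 1))
    (hf : DifferentiableOn ℂ f (Metric.ball (0 : ℂ) 1))
    (u : ℝ → ℂ → ℝ)
    (htor : ∀ r ∈ Set.Ioo (0 : ℝ) 1, IsTorsionFnC γ (f '' Metric.ball (0 : ℂ) r) (u r))
    (hreg : ContDiffOn ℝ 1 (fun p : ℝ × ℂ => u p.1 (f p.2))
      {p : ℝ × ℂ | 0 < p.1 ∧ p.1 < 1 ∧ ‖p.2‖ < p.1}) :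
    MonotoneOn
      (fun r : ℝ => r ^ (-(4 / (1 - γ))) *
        ∫ z in f '' Metric.ball (0 : ℂ) r, ‖gradient (u r) z‖ ^ 2) (Set.Ioo 0 1) ∧
    ((¬ ∃ a b : ℂ, ∀ z ∈ Metric.ball (0 : ℂ) 1, f z = a * z + b) →
      StrictMonoOn
        (fun r : ℝ => r ^ (-(4 / (1 - γ))) *
          ∫ z in f '' Metric.ball (0 : ℂ) r, ‖gradient (u r) z‖ ^ 2) (Set.Ioo 0 1)) := by
  constructor
  · intro a ha b hb hab
    rcases hab.eq_or_lt with rfl | h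
    · exact le_rfl
    · exact (schwarz_key γ hγ0 hγ1 f hinj hf u htor ha.1 h hb.2).1
  · intro hna a ha b hb hab
    exact (schwarz_key γ hγ0 hγ1 f hinj hf u htor ha.1 hab hb.2).2 hna
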